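/- Let n ≥ 1 and let k ≤ n satisfy k ≡ 2 (mod 4). Let b : Fin n → Fin 2 be such that Σ_{i < k} b i is even. Define the vector V_b as follows: V_b = v_{0,b} (the all-diagonal product vector) if Σ_{k ≤ i < n} b i is odd, and V_b = v_{k,b} (circular on the first k coordinates, diagonal on the rest) if Σ_{k ≤ i < n} b i is even. Then ⟨Φₙ, V_b⟩ = 0. In particular, if the n players sharing a GHZ state follow the quantum strategy, the probability that the k chosen players' output bits have even parity is zero. -/

import Mathlib

/-!
The GHZ state is supported on the two constant strings, so `⟨Φₙ, ψ⟩ = (ψ 0…0 + ψ 1…1) / √2`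
(`qInner_ghz`). For a product vector, passing from the all-zeros to the all-ones entry multiplies
by `(-1) ^ (b i)` at every coordinate and by an extra factor `i` at each of the `k` circular ones
(`prodVec_one`), so the ratio of the two entries is `(-1) ^ (∑ b i) * i ^ k`.

If the last bits have odd sum, the total sum is odd and the vector used is the all-diagonal one:
the ratio is `-1`. If they have even sum, the total sum is even and `i ^ k = -1` because
`k ≡ 2 (mod 4)`: the ratio is again `-1`. In both cases the two entries cancel.
-/

/-- The `n`-partite GHZ state as a vector in `(Fin n → Fin 2) → ℂ`. -/
noncomputable def ghz (n : ℕ) : (Fin n → Fin 2) → ℂ := fun s =>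
  if (∀ i, s i = 0) ∨ (∀ i, s i = 1) then (1 / Real.sqrt 2 : ℝ) else 0

/-- Diagonal basis vectors of a single qubit. -/
noncomputable def fdiag : Fin 2 → Fin 2 → ℂ := fun b x =>
  if x = 0 then (1 / Real.sqrt 2 : ℝ) else ((-1 : ℂ) ^ (b : ℕ)) / (Real.sqrt 2 : ℝ)

/-- Circular basis vectors of a single qubit. -/
noncomputable def gcirc : Fin 2 → Fin 2 → ℂ := fun b x =>
  if x = 0 then (1 / Real.sqrt 2 : ℝ)
  else ((-1 : ℂ) ^ (b : ℕ)) * Complex.I / (Real.sqrt 2 : ℝ)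

/-- The product vector `v_{k,b}`: circular basis on the first `k` coordinates,
diagonal basis on the remaining ones. -/
noncomputable def prodVec (n k : ℕ) (b : Fin n → Fin 2) : (Fin n → Fin 2) → ℂ :=
  fun s => (∏ i ∈ Finset.univ.filter (fun i : Fin n => (i : ℕ) < k), gcirc (b i) (s i)) *
    (∏ i ∈ Finset.univ.filter (fun i : Fin n => k ≤ (i : ℕ)), fdiag (b i) (s i))

/-- The inner product `⟨φ, ψ⟩ = Σ_s conj (φ s) * ψ s`. -/
noncomputable def qInner (n : ℕ) (φ ψ : (Fin n → Fin 2) → ℂ) : ℂ :=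
  ∑ s : Fin n → Fin 2, (starRingEnd ℂ) (φ s) * ψ s

theorem fdiag_one (c : Fin 2) : fdiag c 1 = (-1 : ℂ) ^ (c : ℕ) * fdiag c 0 := by
  simp [fdiag, div_eq_mul_inv]

theorem gcirc_one (c : Fin 2) :
    gcirc c 1 = (-1 : ℂ) ^ (c : ℕ) * Complex.I * gcirc c 0 := by
  simp [gcirc, div_eq_mul_inv]

theorem prodVec_one (n k : ℕ) (hk : k ≤ n) (b : Fin n → Fin 2) :
    prodVec n k b (fun _ => 1) =
      (-1 : ℂ) ^ (∑ i ∈ Finset.univ.filter (fun i : Fin n => (i : ℕ) < k), (b i : ℕ)) *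
      (-1 : ℂ) ^ (∑ i ∈ Finset.univ.filter (fun i : Fin n => k ≤ (i : ℕ)), (b i : ℕ)) *
      Complex.I ^ k * prodVec n k b (fun _ => 0) := by
  have hcard : (Finset.univ.filter (fun i : Fin n => (i : ℕ) < k)).card = k := by
    simp [Fin.card_filter_val_lt, hk]
  simp only [prodVec, fdiag_one, gcirc_one, Finset.prod_mul_distrib, Finset.prod_const, hcard,
    Finset.prod_pow_eq_pow_sum]
  ring

/-- Positivity of `n` matters: for `n = 0` the two constant strings coincide. -/
theorem qInner_ghz (n : ℕ) (hn : 1 ≤ n) (ψ : (Fin n → Fin 2) → ℂ) :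
    qInner n (ghz n) ψ =
      ((1 / Real.sqrt 2 : ℝ) : ℂ) * (ψ (fun _ => 0) + ψ (fun _ => 1)) := by
  have hne : (fun _ => 0 : Fin n → Fin 2) ≠ fun _ => 1 := fun h =>
    absurd (congrFun h ⟨0, hn⟩) (by simp)
  unfold qInner
  rw [← Finset.sum_subset (Finset.subset_univ {(fun _ => 0 : Fin n → Fin 2), fun _ => 1}),
    Finset.sum_pair hne]
  · simp only [ghz, implies_true, true_or, or_true, if_true, Complex.conj_ofReal]
    ring
  · intro s _ hs
    have h : ¬ ((∀ i, s i = 0) ∨ (∀ i, s i = 1)) := by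
      simpa [funext_iff] using hs
    simp [ghz, h]

theorem ghz_inner_strategy_vector_eq_zero (n k : ℕ) (hn : 1 ≤ n) (hk : k ≤ n)
    (hk4 : k % 4 = 2) (b : Fin n → Fin 2)
    (hb : Even (∑ i ∈ Finset.univ.filter (fun i : Fin n => (i : ℕ) < k), (b i : ℕ))) :
    qInner n (ghz n)
      (if Odd (∑ i ∈ Finset.univ.filter (fun i : Fin n => k ≤ (i : ℕ)), (b i : ℕ))
        then prodVec n 0 b else prodVec n k b) = 0 := by
  rw [qInner_ghz n hn]
  split_ifs with h
  -- Every coordinate is diagonal here, so only the parity of the full bit sum matters.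
  · have hsum : Odd (∑ i : Fin n, (b i : ℕ)) := by
      rw [← Finset.sum_filter_add_sum_filter_not Finset.univ (fun i : Fin n => (i : ℕ) < k)]
      simpa only [not_lt] using hb.add_odd h
    rw [prodVec_one n 0 (Nat.zero_le n)]
    simp [hsum.neg_one_pow]
  · have hI : Complex.I ^ k = -1 := by
      rw [Complex.I_pow_eq_pow_mod, hk4, Complex.I_sq]
    rw [prodVec_one n k hk, hb.neg_one_pow, (Nat.not_odd_iff_even.mp h).neg_one_pow, hI]
    ring
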